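/- Let n ≥ 1, ε ≥ 0, and 0 < δ < 1/2. Call a real number r a δ-approximate median of a database D = (x_1, …, x_n) ∈ [0,1]^n if |{i : x_i ≤ r}| ≥ (1/2 − δ)n and |{i : x_i ≥ r}| ≥ (1/2 − δ)n. Then there is no mechanism A, assigning to each database D ∈ [0,1]^n a probability distribution A(D) on ℝ, that is ε-differentially private and satisfies Pr[A(D) is a δ-approximate median of D] > 0 for every database D ∈ [0,1]^n. -/

import Mathlib

attribute [local instance] Classical.propDecidable

open MeasureTheory

/-!
Changing the records of a database one at a time turns any database into any other, so privacy
forces the outputs on all databases to have the same null sets. The only approximate median of the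
constant database `(x, …, x)` is `x`, so a mechanism that succeeds there gives `x` positive mass on
this database, hence on every database. A single output distribution would then have an atom at
every point of an uncountable set.
-/

section Neighbors

variable {ι X : Type*}

/-- The neighboring relation of differential privacy: two databases with records in `X`, indexed by
`ι`, that agree outside a single index. Every database with a nonempty index set is its own
neighbor. -/
def AreNeighbors (D D' : ι → X) : Prop :=
  ∃ j, ∀ i, i ≠ j → D i = D' i

lemma areNeighbors_update (D : ι → X) (j : ι) (x : X) :
    AreNeighbors D (Function.update D j x) :=
  ⟨j, fun _ hi => (Function.update_of_ne hi x D).symm⟩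

lemma reflTransGen_areNeighbors [Finite ι] (D D' : ι → X) :
    Relation.ReflTransGen AreNeighbors D D' := by
  have := Fintype.ofFinite ι
  suffices h : ∀ s : Finset ι, Relation.ReflTransGen AreNeighbors D (s.piecewise D' D) by
    simpa only [Finset.piecewise_univ] using h Finset.univ
  intro s
  induction s using Finset.induction_on with
  | empty => rw [Finset.piecewise_empty]
  | insert j s _ ih =>
    rw [Finset.piecewise_insert]
    exact ih.tail (areNeighbors_update _ j (D' j))

end Neighbors

section Privacy

variable {ι X R : Type*} [MeasurableSpace R] {A : (ι → X) → Measure R}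

/-- `ε`-differential privacy of the mechanism `A`, whose output distribution on the database `D` is
the measure `A D`. -/
def IsDifferentiallyPrivate (ε : ℝ) (A : (ι → X) → Measure R) : Prop :=
  ∀ D D' : ι → X, AreNeighbors D D' → ∀ S : Set R, MeasurableSet S →
    A D S ≤ ENNReal.ofReal (Real.exp ε) * A D' S

lemma IsDifferentiallyPrivate.absolutelyContinuous {ε : ℝ} (hA : IsDifferentiallyPrivate ε A)
    {D D' : ι → X} (h : AreNeighbors D D') : A D ≪ A D' :=
  Measure.absolutelyContinuous_of_le_smul (Measure.le_iff.2 (hA D D' h))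

lemma absolutelyContinuous_of_forall_areNeighbors [Finite ι]
    (hA : ∀ D D' : ι → X, AreNeighbors D D' → A D ≪ A D') (D D' : ι → X) : A D ≪ A D' := by
  induction reflTransGen_areNeighbors D D' with
  | refl => exact Measure.AbsolutelyContinuous.rfl
  | tail _ h ih => exact ih.trans (hA _ _ h)

end Privacy

section ApproxMedian

variable {ι R : Type*} [Fintype ι] {δ : ℝ}

/-- `r` is a `δ`-approximate median of the database `D`: at least a `1 / 2 - δ` fraction of the
records of `D` lie on either side of `r`, where records equal to `r` count for both sides. -/
def IsApproxMedian [LE R] (δ : ℝ) (D : ι → R) (r : R) : Prop :=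
  (1 / 2 - δ) * Fintype.card ι ≤ ((Finset.univ.filter (fun i => D i ≤ r)).card : ℝ) ∧
  (1 / 2 - δ) * Fintype.card ι ≤ ((Finset.univ.filter (fun i => r ≤ D i)).card : ℝ)

lemma exists_of_mul_card_le_card_filter [Nonempty ι] {c : ℝ} (hc : 0 < c) {p : ι → Prop}
    (h : c * Fintype.card ι ≤ ((Finset.univ.filter p).card : ℝ)) : ∃ i, p i := by
  have hpos : (0 : ℝ) < (Finset.univ.filter p).card :=
    (mul_pos hc (Nat.cast_pos.2 Fintype.card_pos)).trans_le h
  obtain ⟨i, hi⟩ := Finset.card_pos.1 (Nat.cast_pos.1 hpos)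
  exact ⟨i, (Finset.mem_filter.1 hi).2⟩

lemma IsApproxMedian.eq_of_const [Nonempty ι] [PartialOrder R] (hδ : δ < 1 / 2) {x r : R}
    (h : IsApproxMedian δ (fun _ : ι => x) r) : r = x := by
  obtain ⟨_, hxr⟩ := exists_of_mul_card_le_card_filter (sub_pos.2 hδ) h.1
  obtain ⟨_, hrx⟩ := exists_of_mul_card_le_card_filter (sub_pos.2 hδ) h.2
  exact le_antisymm hrx hxr

end ApproxMedian

lemma countable_setOf_measure_singleton_pos {R : Type*} [MeasurableSpace R]
    [MeasurableSingletonClass R] (μ : Measure R) [SFinite μ] : {x | 0 < μ {x}}.Countable :=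
  Measure.countable_meas_pos_of_disjoint_iUnion measurableSet_singleton
    (fun _ _ hxy => Set.disjoint_singleton.2 hxy)

lemma exists_measure_singleton_eq_zero {R : Type*} [MeasurableSpace R]
    [MeasurableSingletonClass R] (μ : Measure R) [SFinite μ] {X : Set R} (hX : ¬ X.Countable) :
    ∃ x ∈ X, μ {x} = 0 := by
  by_contra! h
  exact hX ((countable_setOf_measure_singleton_pos μ).mono fun x hx => pos_iff_ne_zero.2 (h x hx))

theorem stmt11_general {ι R : Type*} [Fintype ι] [Nonempty ι] [PartialOrder R] [MeasurableSpace R]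
    [MeasurableSingletonClass R] {X : Set R} (hX : ¬ X.Countable) {δ : ℝ} (hδ : δ < 1 / 2)
    (A : (ι → X) → Measure R) [∀ D, SFinite (A D)]
    (hA : ∀ D D', AreNeighbors D D' → A D ≪ A D') :
    ∃ x : X, A (fun _ => x) {r | IsApproxMedian δ (fun _ : ι => (x : R)) r} = 0 := by
  obtain ⟨x₀, hx₀⟩ := Set.Infinite.nonempty (mt Set.Finite.countable hX)
  let D₀ : ι → X := fun _ => ⟨x₀, hx₀⟩
  obtain ⟨x, hx, hx_null⟩ := exists_measure_singleton_eq_zero (A D₀) hX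
  have hx_null' : A (fun _ => ⟨x, hx⟩) {x} = 0 :=
    absolutelyContinuous_of_forall_areNeighbors hA _ D₀ hx_null
  exact ⟨⟨x, hx⟩, measure_mono_null (fun _ hr => IsApproxMedian.eq_of_const hδ hr) hx_null'⟩

theorem stmt11 (n : ℕ) (hn : 1 ≤ n) (ε : ℝ) (hε : 0 ≤ ε) (δ : ℝ)
    (hδ0 : 0 < δ) (hδ1 : δ < 1 / 2) :
    ¬ ∃ A : (Fin n → Set.Icc (0 : ℝ) 1) → Measure ℝ,
      -- A(D) is a probability distribution on ℝ
      (∀ D, IsProbabilityMeasure (A D)) ∧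
      -- A is ε-differentially private
      (∀ D D' : Fin n → Set.Icc (0 : ℝ) 1, (∃ j, ∀ i, i ≠ j → D i = D' i) →
        ∀ S : Set ℝ, MeasurableSet S →
          A D S ≤ ENNReal.ofReal (Real.exp ε) * A D' S) ∧
      -- A outputs a δ-approximate median with positive probability on every database
      (∀ D : Fin n → Set.Icc (0 : ℝ) 1,
        0 < A D {r : ℝ |
          (1 / 2 - δ) * n ≤ ((Finset.univ.filter (fun i => (D i : ℝ) ≤ r)).card : ℝ) ∧
          (1 / 2 - δ) * n ≤ ((Finset.univ.filter (fun i => r ≤ (D i : ℝ))).card : ℝ)}) := by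
  rintro ⟨A, _, hdp, hmed⟩
  have hA : IsDifferentiallyPrivate ε A := hdp
  have : Nonempty (Fin n) := Fin.pos_iff_nonempty.1 hn
  have hX : ¬ (Set.Icc (0 : ℝ) 1).Countable := by
    simp only [Cardinal.Real.Icc_countable_iff, not_le, zero_lt_one]
  obtain ⟨x, hx⟩ := stmt11_general hX hδ1 A fun _ _ => hA.absolutelyContinuous
  exact (hmed fun _ => x).ne' (by simpa only [IsApproxMedian, Fintype.card_fin] using hx)
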